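/- Let u : ℝ → ℝ be C² with u'(y) ≥ 1/𝔘 and |u''(y)| ≤ 𝔘 u'(y) for all y, where 𝔘 ≥ 1. Let k ∈ ℕ, k ≥ 1, t > 0, and let f(x,y) = g(y) e^{ikx} + conj. be a smooth, rapidly decaying function localized at x-frequency ±k, with stream function ψ solving Δψ = f (periodic in x, decaying in y). Then k t ‖f‖_{Ḣ⁻¹} ≤ 2𝔘² (‖f‖_{L²} + ‖Jf‖_{L²}), where J = ∂_y + t u' ∂_x and ‖f‖_{Ḣ⁻¹} = ‖∇ψ‖_{L²}. -/

import Mathlib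

open MeasureTheory

/-!
Pairing the stream equation `ψ'' - k²ψ = g` with `ψ` gives `‖f‖²_{Ḣ⁻¹} = -⟨ψ, g⟩`. Integrating by
parts, testing `Jg = g' + ikt u' g` against `φ = ψ / u'` recovers this pairing with a factor `kt`:
`⟨φ, Jg⟩ + ⟨φ', g⟩ = ikt ⟨u' φ, g⟩ = ikt ⟨ψ, g⟩`. The hypotheses on `u` bound `φ` and `φ'` in `L²`
by `‖f‖_{Ḣ⁻¹}`, and one power of `‖f‖_{Ḣ⁻¹}` cancels after Cauchy–Schwarz.
-/

open scoped InnerProductSpace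

section L2

variable {α 𝕜 E : Type*} [MeasurableSpace α] {μ : Measure α} [NormedAddCommGroup E]

theorem memLp_two_of_norm_sq_le {f : α → E} {e : α → ℝ} {C : ℝ}
    (hf : AEStronglyMeasurable f μ) (he : Integrable e μ) (h : ∀ᵐ x ∂μ, ‖f x‖ ^ 2 ≤ C * e x) :
    MemLp f 2 μ := by
  rw [memLp_two_iff_integrable_sq_norm hf]
  refine (he.const_mul C).mono' (hf.norm.pow 2) ?_
  simpa using h

theorem sqrt_integral_norm_sq_le {f : α → E} {e : α → ℝ} {C : ℝ} (hC : 0 ≤ C)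
    (he : Integrable e μ) (h : ∀ᵐ x ∂μ, ‖f x‖ ^ 2 ≤ C ^ 2 * e x) :
    √(∫ x, ‖f x‖ ^ 2 ∂μ) ≤ C * √(∫ x, e x ∂μ) :=
  calc √(∫ x, ‖f x‖ ^ 2 ∂μ)
      ≤ √(∫ x, C ^ 2 * e x ∂μ) := Real.sqrt_le_sqrt <|
        integral_mono_of_nonneg (ae_of_all _ fun x => sq_nonneg ‖f x‖) (he.const_mul _) h
    _ = C * √(∫ x, e x ∂μ) := by
        rw [integral_const_mul, Real.sqrt_mul (sq_nonneg C), Real.sqrt_sq hC]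

variable [RCLike 𝕜] [InnerProductSpace 𝕜 E]

theorem integrable_inner_of_memLp_two {f g : α → E} (hf : MemLp f 2 μ) (hg : MemLp g 2 μ) :
    Integrable (fun x => ⟪f x, g x⟫_𝕜) μ :=
  (hf.norm.integrable_mul hg.norm).mono' (hf.1.inner hg.1)
    (ae_of_all _ fun x => norm_inner_le_norm (f x) (g x))

theorem norm_integral_inner_le_sqrt_mul_sqrt {f g : α → E}
    (hf : MemLp f 2 μ) (hg : MemLp g 2 μ) :
    ‖∫ x, ⟪f x, g x⟫_𝕜 ∂μ‖ ≤ √(∫ x, ‖f x‖ ^ 2 ∂μ) * √(∫ x, ‖g x‖ ^ 2 ∂μ) := by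
  have holder := integral_mul_norm_le_Lp_mul_Lq (p := 2) (q := 2) .two_two
    (by simpa using hf) (by simpa using hg)
  calc ‖∫ x, ⟪f x, g x⟫_𝕜 ∂μ‖
      ≤ ∫ x, ‖f x‖ * ‖g x‖ ∂μ :=
        norm_integral_le_of_norm_le (hf.norm.integrable_mul hg.norm)
          (ae_of_all _ fun x => norm_inner_le_norm (f x) (g x))
    _ ≤ √(∫ x, ‖f x‖ ^ 2 ∂μ) * √(∫ x, ‖g x‖ ^ 2 ∂μ) := by
        simpa [Real.sqrt_eq_rpow] using holder

end L2

/-- The squared modulus of the gradient of `ψ(y) e^{ikx}`, a function of `y` alone. If `ψ` is the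
stream function profile of `f`, its integral is `‖f‖²_{Ḣ⁻¹}` up to the normalization of the
`x`-integral. -/
noncomputable def gradNormSq {E : Type*} [NormedAddCommGroup E] [NormedSpace ℝ E] (k : ℝ)
    (ψ : ℝ → E) (y : ℝ) : ℝ :=
  ‖deriv ψ y‖ ^ 2 + k ^ 2 * ‖ψ y‖ ^ 2

section GradNormSq

variable {E : Type*} [NormedAddCommGroup E] [NormedSpace ℝ E] {k : ℝ} {ψ : ℝ → E}

theorem gradNormSq_nonneg (k : ℝ) (ψ : ℝ → E) (y : ℝ) : 0 ≤ gradNormSq k ψ y := by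
  unfold gradNormSq
  positivity

theorem norm_deriv_sq_le_gradNormSq (k : ℝ) (ψ : ℝ → E) (y : ℝ) :
    ‖deriv ψ y‖ ^ 2 ≤ gradNormSq k ψ y :=
  le_add_of_nonneg_right (by positivity)

theorem norm_sq_le_gradNormSq (hk : 1 ≤ |k|) (ψ : ℝ → E) (y : ℝ) :
    ‖ψ y‖ ^ 2 ≤ gradNormSq k ψ y := by
  have hk_sq : 1 ≤ k ^ 2 := (one_le_sq_iff_one_le_abs k).2 hk
  calc ‖ψ y‖ ^ 2
      ≤ k ^ 2 * ‖ψ y‖ ^ 2 := le_mul_of_one_le_left (sq_nonneg _) hk_sq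
    _ ≤ gradNormSq k ψ y := le_add_of_nonneg_left (sq_nonneg _)

theorem memLp_two_of_integrable_gradNormSq (hk : 1 ≤ |k|) (hψ : AEStronglyMeasurable ψ)
    (hψ_int : Integrable (gradNormSq k ψ)) : MemLp ψ 2 :=
  memLp_two_of_norm_sq_le (C := 1) hψ hψ_int
    (ae_of_all _ (by simpa using norm_sq_le_gradNormSq hk ψ))

theorem memLp_two_deriv_of_integrable_gradNormSq [CompleteSpace E]
    (hψ_int : Integrable (gradNormSq k ψ)) : MemLp (deriv ψ) 2 :=
  memLp_two_of_norm_sq_le (C := 1) (aestronglyMeasurable_deriv ψ _) hψ_int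
    (ae_of_all _ (by simpa using norm_deriv_sq_le_gradNormSq k ψ))

end GradNormSq

section Energy

variable {𝕜 E : Type*} [RCLike 𝕜] [NormedAddCommGroup E] [InnerProductSpace 𝕜 E] [NormedSpace ℝ E]

theorem integral_inner_deriv_right_eq_neg_left {f g f' g' : ℝ → E}
    (hf : ∀ y, HasDerivAt f (f' y) y) (hg : ∀ y, HasDerivAt g (g' y) y)
    (hfg' : Integrable fun y => ⟪f y, g' y⟫_𝕜) (hf'g : Integrable fun y => ⟪f' y, g y⟫_𝕜)
    (hfg : Integrable fun y => ⟪f y, g y⟫_𝕜) :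
    ∫ y, ⟪f y, g' y⟫_𝕜 = -∫ y, ⟪f' y, g y⟫_𝕜 := by
  rw [eq_neg_iff_add_eq_zero, ← integral_add hfg' hf'g]
  exact integral_eq_zero_of_hasDerivAt_of_integrable (fun y => (hf y).inner 𝕜 (hg y))
    (hfg'.add hf'g) hfg

theorem integral_gradNormSq_eq_neg_integral_inner {k : ℝ} {ψ g : ℝ → E}
    (hψ : Differentiable ℝ ψ) (hψ' : Differentiable ℝ (deriv ψ))
    (hstream : ∀ y, deriv (deriv ψ) y - (k : 𝕜) ^ 2 • ψ y = g y)
    (hψ_mem : MemLp ψ 2) (hψ'_mem : MemLp (deriv ψ) 2) (hg_mem : MemLp g 2) :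
    ((∫ y, gradNormSq k ψ y : ℝ) : 𝕜) = -∫ y, ⟪ψ y, g y⟫_𝕜 := by
  have hψ'' (y : ℝ) : HasDerivAt (deriv ψ) (g y + (k : 𝕜) ^ 2 • ψ y) y := by
    simpa [← hstream y] using (hψ' y).hasDerivAt
  have hψψ : Integrable fun y => ⟪ψ y, (k : 𝕜) ^ 2 • ψ y⟫_𝕜 :=
    integrable_inner_of_memLp_two hψ_mem (hψ_mem.const_smul _)
  have hψg := integrable_inner_of_memLp_two (𝕜 := 𝕜) hψ_mem hg_mem
  have hψ'ψ' := integrable_inner_of_memLp_two (𝕜 := 𝕜) hψ'_mem hψ'_mem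
  have by_parts := integral_inner_deriv_right_eq_neg_left (𝕜 := 𝕜)
    (fun y => (hψ y).hasDerivAt) hψ''
    (integrable_inner_of_memLp_two hψ_mem (hg_mem.add (hψ_mem.const_smul _))) hψ'ψ'
    (integrable_inner_of_memLp_two hψ_mem hψ'_mem)
  have density (y : ℝ) :
      (gradNormSq k ψ y : 𝕜) = ⟪deriv ψ y, deriv ψ y⟫_𝕜 + ⟪ψ y, (k : 𝕜) ^ 2 • ψ y⟫_𝕜 := by
    simp [gradNormSq, inner_smul_right, inner_self_eq_norm_sq_to_K]
  simp_rw [inner_add_right] at by_parts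
  rw [integral_add hψg hψψ] at by_parts
  rw [← integral_ofReal]
  simp_rw [density]
  rw [integral_add hψ'ψ' hψψ]
  linear_combination by_parts

end Energy

section VectorField

variable {E : Type*} [NormedAddCommGroup E] [InnerProductSpace ℂ E]

/-- The vector field `J = ∂_y + t u' ∂_x` acting on the `y`-profile `g` of `g(y) e^{ikx}`, where
`∂_x` is multiplication by `ik`. -/
noncomputable def vectorFieldJ (u : ℝ → ℝ) (k t : ℝ) (g : ℝ → E) (y : ℝ) : E :=
  deriv g y + (Complex.I * k * t * deriv u y : ℂ) • g y

theorem continuous_vectorFieldJ {u : ℝ → ℝ} {k t : ℝ} {g : ℝ → E} (hu' : Continuous (deriv u))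
    (hg : Continuous g) (hg' : Continuous (deriv g)) : Continuous (vectorFieldJ u k t g) := by
  unfold vectorFieldJ
  fun_prop

theorem hasCompactSupport_vectorFieldJ {u : ℝ → ℝ} {k t : ℝ} {g : ℝ → E}
    (hg : HasCompactSupport g) : HasCompactSupport (vectorFieldJ u k t g) :=
  hg.deriv.add (hg.smul_left (f := fun y => (Complex.I * k * t * deriv u y : ℂ)))

theorem integral_inner_vectorFieldJ_add_integral_inner_deriv {u : ℝ → ℝ} {k t : ℝ} {φ g : ℝ → E}
    (hφ : Differentiable ℝ φ) (hg : Differentiable ℝ g)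
    (hφ_mem : MemLp φ 2) (hφ'_mem : MemLp (deriv φ) 2)
    (huφ_mem : MemLp (fun y => deriv u y • φ y) 2)
    (hg_mem : MemLp g 2) (hJg_mem : MemLp (vectorFieldJ u k t g) 2) :
    (∫ y, ⟪φ y, vectorFieldJ u k t g y⟫_ℂ) + ∫ y, ⟪deriv φ y, g y⟫_ℂ
      = Complex.I * k * t * ∫ y, ⟪deriv u y • φ y, g y⟫_ℂ := by
  have hJ := integrable_inner_of_memLp_two (𝕜 := ℂ) hφ_mem hJg_mem
  have hu := (integrable_inner_of_memLp_two (𝕜 := ℂ) huφ_mem hg_mem).const_mul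
    (Complex.I * k * t)
  have inner_deriv (y : ℝ) : ⟪φ y, deriv g y⟫_ℂ
      = ⟪φ y, vectorFieldJ u k t g y⟫_ℂ - Complex.I * k * t * ⟪deriv u y • φ y, g y⟫_ℂ := by
    rw [vectorFieldJ, inner_add_right, inner_smul_right, ← Complex.coe_smul, inner_smul_left,
      Complex.conj_ofReal]
    ring
  have by_parts := integral_inner_deriv_right_eq_neg_left (𝕜 := ℂ)
    (fun y => (hφ y).hasDerivAt) (fun y => (hg y).hasDerivAt)
    (by simp only [inner_deriv]; exact hJ.sub hu)
    (integrable_inner_of_memLp_two hφ'_mem hg_mem) (integrable_inner_of_memLp_two hφ_mem hg_mem)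
  simp_rw [inner_deriv] at by_parts
  rw [integral_sub hJ hu, integral_const_mul] at by_parts
  linear_combination by_parts

theorem abs_mul_integral_gradNormSq_le {u : ℝ → ℝ} {k t : ℝ} {ψ φ g : ℝ → E}
    (hψ : Differentiable ℝ ψ) (hψ' : Differentiable ℝ (deriv ψ)) (hφ : Differentiable ℝ φ)
    (hg : Differentiable ℝ g) (hstream : ∀ y, deriv (deriv ψ) y - (k : ℂ) ^ 2 • ψ y = g y)
    (huφ : ∀ y, deriv u y • φ y = ψ y)
    (hψ_mem : MemLp ψ 2) (hψ'_mem : MemLp (deriv ψ) 2)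
    (hφ_mem : MemLp φ 2) (hφ'_mem : MemLp (deriv φ) 2)
    (hg_mem : MemLp g 2) (hJg_mem : MemLp (vectorFieldJ u k t g) 2) :
    |k * t| * ∫ y, gradNormSq k ψ y
      ≤ √(∫ y, ‖φ y‖ ^ 2) * √(∫ y, ‖vectorFieldJ u k t g y‖ ^ 2)
        + √(∫ y, ‖deriv φ y‖ ^ 2) * √(∫ y, ‖g y‖ ^ 2) := by
  have energy : ((∫ y, gradNormSq k ψ y : ℝ) : ℂ) = -∫ y, ⟪ψ y, g y⟫_ℂ :=
    integral_gradNormSq_eq_neg_integral_inner hψ hψ' hstream hψ_mem hψ'_mem hg_mem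
  have duality := integral_inner_vectorFieldJ_add_integral_inner_deriv hφ hg hφ_mem hφ'_mem
    (by simpa only [huφ] using hψ_mem) hg_mem hJg_mem
  simp only [huφ] at duality
  have energy_nonneg : 0 ≤ ∫ y, gradNormSq k ψ y := integral_nonneg (gradNormSq_nonneg k ψ)
  calc |k * t| * ∫ y, gradNormSq k ψ y
      = ‖Complex.I * k * t * ((∫ y, gradNormSq k ψ y : ℝ) : ℂ)‖ := by
        simp [abs_mul, abs_of_nonneg energy_nonneg]
    _ = ‖(∫ y, ⟪φ y, vectorFieldJ u k t g y⟫_ℂ) + ∫ y, ⟪deriv φ y, g y⟫_ℂ‖ := by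
        rw [energy, mul_neg, norm_neg, duality]
    _ ≤ _ := (norm_add_le _ _).trans <| add_le_add
        (norm_integral_inner_le_sqrt_mul_sqrt hφ_mem hJg_mem)
        (norm_integral_inner_le_sqrt_mul_sqrt hφ'_mem hg_mem)

end VectorField

section Weight

variable {E : Type*} [NormedAddCommGroup E] [NormedSpace ℝ E] {U k c y : ℝ} {w : ℝ → ℝ}
  {ψ : ℝ → E}

theorem norm_inv_smul_le (hU : 0 < U) (hc : 1 / U ≤ c) (v : E) : ‖c⁻¹ • v‖ ≤ U * ‖v‖ := by
  have hc_pos : 0 < c := (one_div_pos.2 hU).trans_le hc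
  have hc_inv : c⁻¹ ≤ U := inv_le_of_inv_le₀ hU (by rwa [← one_div])
  rw [norm_smul, norm_inv, Real.norm_of_nonneg hc_pos.le]
  gcongr

theorem norm_deriv_inv_smul_le (hU : 0 < U) (hw : 1 / U ≤ w y) (hw' : |deriv w y| ≤ U * w y)
    (hw_diff : DifferentiableAt ℝ w y) (hψ : DifferentiableAt ℝ ψ y) :
    ‖deriv (fun x => (w x)⁻¹ • ψ x) y‖ ≤ U * ‖deriv ψ y‖ + U ^ 2 * ‖ψ y‖ := by
  have hw_pos : 0 < w y := (one_div_pos.2 hU).trans_le hw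
  have hw_inv : (w y)⁻¹ ≤ U := inv_le_of_inv_le₀ hU (by rwa [← one_div])
  have hw'_div : |deriv w y| / w y ^ 2 ≤ U ^ 2 :=
    calc |deriv w y| / w y ^ 2
        ≤ U * w y / w y ^ 2 := by gcongr
      _ = U * (w y)⁻¹ := by field_simp
      _ ≤ U * U := by gcongr
      _ = U ^ 2 := (sq U).symm
  have hderiv : deriv (fun x => (w x)⁻¹ • ψ x) y
      = (w y)⁻¹ • deriv ψ y + (-deriv w y / w y ^ 2) • ψ y :=
    ((hw_diff.hasDerivAt.inv hw_pos.ne').smul hψ.hasDerivAt).deriv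
  rw [hderiv]
  refine (norm_add_le _ _).trans ?_
  rw [norm_smul, norm_smul, norm_inv, norm_div, norm_neg, norm_pow,
    Real.norm_of_nonneg hw_pos.le, Real.norm_eq_abs]
  gcongr

theorem norm_inv_smul_sq_le_gradNormSq (hU : 0 < U) (hk : 1 ≤ |k|) (hc : 1 / U ≤ c) :
    ‖c⁻¹ • ψ y‖ ^ 2 ≤ U ^ 2 * gradNormSq k ψ y :=
  calc ‖c⁻¹ • ψ y‖ ^ 2
      ≤ (U * ‖ψ y‖) ^ 2 := by gcongr; exact norm_inv_smul_le hU hc (ψ y)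
    _ = U ^ 2 * ‖ψ y‖ ^ 2 := mul_pow _ _ _
    _ ≤ U ^ 2 * gradNormSq k ψ y := by gcongr; exact norm_sq_le_gradNormSq hk ψ y

theorem norm_deriv_inv_smul_sq_le_gradNormSq (hU : 1 ≤ U) (hk : 1 ≤ |k|) (hw : 1 / U ≤ w y)
    (hw' : |deriv w y| ≤ U * w y) (hw_diff : DifferentiableAt ℝ w y)
    (hψ : DifferentiableAt ℝ ψ y) :
    ‖deriv (fun x => (w x)⁻¹ • ψ x) y‖ ^ 2 ≤ (2 * U ^ 2) ^ 2 * gradNormSq k ψ y :=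
  calc ‖deriv (fun x => (w x)⁻¹ • ψ x) y‖ ^ 2
      ≤ (U * ‖deriv ψ y‖ + U ^ 2 * ‖ψ y‖) ^ 2 := by
        gcongr; exact norm_deriv_inv_smul_le (by positivity) hw hw' hw_diff hψ
    _ ≤ (U ^ 2 * ‖deriv ψ y‖ + U ^ 2 * ‖ψ y‖) ^ 2 := by
        gcongr; exact le_self_pow₀ hU two_ne_zero
    _ = U ^ 4 * (‖deriv ψ y‖ + ‖ψ y‖) ^ 2 := by ring
    _ ≤ U ^ 4 * (2 * (gradNormSq k ψ y + gradNormSq k ψ y)) := by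
        gcongr
        exact add_sq_le.trans (mul_le_mul_of_nonneg_left (add_le_add
          (norm_deriv_sq_le_gradNormSq k ψ y) (norm_sq_le_gradNormSq hk ψ y)) zero_le_two)
    _ = (2 * U ^ 2) ^ 2 * gradNormSq k ψ y := by ring

end Weight

theorem mul_le_of_mul_mul_self_le {R : Type*} [Semiring R] [LinearOrder R] [IsStrictOrderedRing R]
    {a c x : R} (hx : 0 ≤ x) (hc : 0 ≤ c) (h : a * (x * x) ≤ c * x) : a * x ≤ c := by
  rcases hx.eq_or_lt with rfl | hx_pos
  · simpa using hc
  · exact le_of_mul_le_mul_right (by rwa [mul_assoc]) hx_pos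

theorem Hminus1_bound_via_vector_field_general {E : Type*} [NormedAddCommGroup E]
    [InnerProductSpace ℂ E] [CompleteSpace E] {𝔘 : ℝ} (hU : 1 ≤ 𝔘) {u : ℝ → ℝ}
    (hu : Differentiable ℝ (deriv u)) (hu' : ∀ y, 1 / 𝔘 ≤ deriv u y)
    (hu'' : ∀ y, |deriv (deriv u) y| ≤ 𝔘 * deriv u y) {k : ℝ} (hk : 1 ≤ |k|) (t : ℝ)
    {g : ℝ → E} (hg : Differentiable ℝ g) (hg_mem : MemLp g 2)
    (hJg_mem : MemLp (vectorFieldJ u k t g) 2) {ψ : ℝ → E} (hψ : Differentiable ℝ ψ)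
    (hψ' : Differentiable ℝ (deriv ψ))
    (hstream : ∀ y, deriv (deriv ψ) y - (k : ℂ) ^ 2 • ψ y = g y)
    (hψ_int : Integrable (gradNormSq k ψ)) :
    |k * t| * √(∫ y, gradNormSq k ψ y)
      ≤ 2 * 𝔘 ^ 2 * (√(∫ y, ‖g y‖ ^ 2) + √(∫ y, ‖vectorFieldJ u k t g y‖ ^ 2)) := by
  have hU_pos : 0 < 𝔘 := one_pos.trans_le hU
  have hu'_ne (y : ℝ) : deriv u y ≠ 0 := ((one_div_pos.2 hU_pos).trans_le (hu' y)).ne'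
  set φ : ℝ → E := fun y => (deriv u y)⁻¹ • ψ y
  have hφ : Differentiable ℝ φ := (hu.inv hu'_ne).smul hψ
  have hφ_le : ∀ᵐ y, ‖φ y‖ ^ 2 ≤ 𝔘 ^ 2 * gradNormSq k ψ y :=
    ae_of_all _ fun y => norm_inv_smul_sq_le_gradNormSq hU_pos hk (hu' y)
  have hφ'_le : ∀ᵐ y, ‖deriv φ y‖ ^ 2 ≤ (2 * 𝔘 ^ 2) ^ 2 * gradNormSq k ψ y :=
    ae_of_all _ fun y =>
      norm_deriv_inv_smul_sq_le_gradNormSq hU hk (hu' y) (hu'' y) (hu y) (hψ y)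
  have pairing := abs_mul_integral_gradNormSq_le hψ hψ' hφ hg hstream
    (fun y => smul_inv_smul₀ (hu'_ne y) (ψ y))
    (memLp_two_of_integrable_gradNormSq hk hψ.continuous.aestronglyMeasurable hψ_int)
    (memLp_two_deriv_of_integrable_gradNormSq hψ_int)
    (memLp_two_of_norm_sq_le hφ.continuous.aestronglyMeasurable hψ_int hφ_le)
    (memLp_two_of_norm_sq_le (aestronglyMeasurable_deriv φ _) hψ_int hφ'_le) hg_mem hJg_mem
  have hφ_norm := sqrt_integral_norm_sq_le hU_pos.le hψ_int hφ_le
  have hφ'_norm := sqrt_integral_norm_sq_le (by positivity) hψ_int hφ'_le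
  set N := √(∫ y, gradNormSq k ψ y)
  have hN : N * N = ∫ y, gradNormSq k ψ y :=
    Real.mul_self_sqrt (integral_nonneg (gradNormSq_nonneg k ψ))
  have hU_le : 𝔘 ≤ 2 * 𝔘 ^ 2 := by nlinarith
  refine mul_le_of_mul_mul_self_le (Real.sqrt_nonneg _) (by positivity) ?_
  calc |k * t| * (N * N)
      = |k * t| * ∫ y, gradNormSq k ψ y := by rw [hN]
    _ ≤ _ := pairing
    _ ≤ 2 * 𝔘 ^ 2 * N * √(∫ y, ‖vectorFieldJ u k t g y‖ ^ 2)
        + 2 * 𝔘 ^ 2 * N * √(∫ y, ‖g y‖ ^ 2) := by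
        gcongr
        exact hφ_norm.trans (by gcongr)
    _ = _ := by ring

/-- Lemma 3.2: for `f` localized at `x`-frequency `±k`, represented by its Fourier
coefficient `g(y)` with stream function coefficient `ψ` solving `ψ'' − k²ψ = g`,
one has `kt‖f‖_{Ḣ⁻¹} ≤ 2𝔘²(‖f‖ + ‖Jf‖)`, where
`‖f‖_{Ḣ⁻¹}² = ∫ (‖ψ'‖² + k²‖ψ‖²)`, `‖f‖² = ∫ ‖g‖²` and
`Jf` has coefficient `g' + i k t u' g`. -/
theorem Hminus1_bound_via_vector_field (𝔘 : ℝ) (hU : 1 ≤ 𝔘)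
    (u : ℝ → ℝ) (hu : ContDiff ℝ 2 u)
    (hu' : ∀ y : ℝ, 1 / 𝔘 ≤ deriv u y)
    (hu'' : ∀ y : ℝ, |deriv (deriv u) y| ≤ 𝔘 * deriv u y)
    (k : ℕ) (hk : 1 ≤ k) (t : ℝ) (ht : 0 < t)
    (g : ℝ → ℂ) (hg : ContDiff ℝ (⊤ : ℕ∞) g) (hgsupp : HasCompactSupport g)
    (ψ : ℝ → ℂ) (hψ : ContDiff ℝ (⊤ : ℕ∞) ψ)
    (hstream : ∀ y : ℝ, deriv (deriv ψ) y - (k : ℝ)^2 * ψ y = g y)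
    (hψint : Integrable (fun y : ℝ => ‖deriv ψ y‖^2 + (k : ℝ)^2 * ‖ψ y‖^2)) :
    (k : ℝ) * t * Real.sqrt (∫ y : ℝ, (‖deriv ψ y‖^2 + (k : ℝ)^2 * ‖ψ y‖^2))
      ≤ 2 * 𝔘^2 * (Real.sqrt (∫ y : ℝ, ‖g y‖^2)
          + Real.sqrt (∫ y : ℝ,
              ‖deriv g y + Complex.I * (k : ℂ) * (t : ℂ) * ((deriv u y : ℝ) : ℂ) * g y‖^2)) := by
  have hu_deriv : ContDiff ℝ 1 (deriv u) := (contDiff_succ_iff_deriv (n := 1)).1 hu |>.2.2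
  have hg_deriv : ContDiff ℝ (⊤ : ℕ∞) (deriv g) := (contDiff_infty_iff_deriv.1 hg).2
  have hψ_deriv : ContDiff ℝ (⊤ : ℕ∞) (deriv ψ) := (contDiff_infty_iff_deriv.1 hψ).2
  have hJg_mem : MemLp (vectorFieldJ u k t g) 2 :=
    (continuous_vectorFieldJ hu_deriv.continuous hg.continuous
      hg_deriv.continuous).memLp_of_hasCompactSupport (hasCompactSupport_vectorFieldJ hgsupp)
  have hψ_int : Integrable (gradNormSq (k : ℝ) ψ) := hψint
  have bound := Hminus1_bound_via_vector_field_general hU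
    (hu_deriv.differentiable one_ne_zero) hu' hu'' (k := k) (by simpa using hk) t
    (hg.differentiable (by simp)) (hg.continuous.memLp_of_hasCompactSupport hgsupp) hJg_mem
    (hψ.differentiable (by simp)) (hψ_deriv.differentiable (by simp)) (by simpa using hstream)
    hψ_int
  have hkt : 0 ≤ (k : ℝ) * t := by positivity
  simpa only [vectorFieldJ, gradNormSq, abs_of_nonneg hkt, smul_eq_mul,
    Complex.ofReal_natCast] using bound
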